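/- arXiv:2510.01911 — 2 statements merged into one kernel-verified Lean document; each statement's English description precedes it below -/
import Mathlib

section
/- For every constant vector v ∈ ℝ² and every x ∈ D, ∫_{∂D} G⁰(x − y) v dσ(y) = (τ₁ R ln R − (τ₂/2) R) v; that is, inside the disk the single-layer potential of the Kelvin matrix acts on constant densities as multiplication by the scalar τ₁ R ln R − (τ₂/2) R. -/
/-!
Identify `ℝ²` with `ℂ`, write `x` as `a` with `|a| < R`, and set `w = a - R e^{iθ}`, which never
vanishes. The entries of `w ⊗ w / |w|²` are `(1/2) δ_{ij}` plus or minus half the real or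
imaginary part of `q = w / conj w`, so only two averages over the circle are needed.

* The mean of `log |w|` is `log R`, since `a` lies inside the circle (Jensen's formula).
* The mean of `q` is `0`. On `|y| = R` one has `conj y = R² / y`, so `q` agrees there with
  `(a - y) y / (conj a * y - R²)`, which is holomorphic on the closed disk because `|a| < R` and
  which vanishes at `y = 0`; the mean value property applies (`integral_div_conj_sub_circleMap`).

Multiplying by the length `2πR` and the prefactors `τ₁ / (2π)` and `-τ₂ / (2π)`, the logarithmic
part contributes `τ₁ R log R` times the identity and the rank-one part `-(τ₂ / 2) R` times it.

The remaining ingredient is that the Hausdorff measure `μH[1]` on the circle is `R dθ`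
(`hausdorff_restrict_sphere`). The upper bound holds because the parametrization is `R`-Lipschitz.
For the lower bound, on arcs of angle at most `δ` a chord is at least `(1 - δ)` times the arc, so the
inverse of the parametrization is `((1 - δ) R)⁻¹`-Lipschitz there; cutting a measurable set of
angles into pieces of length `δ`, summing, and letting `δ → 0` gives the sharp constant.
-/

open MeasureTheory

/-- `τ₁ = (1/2)(1/μ + 1/(λ+2μ))`. -/
noncomputable def tau1 (lam mu : ℝ) : ℝ := (1 / 2) * (1 / mu + 1 / (lam + 2 * mu))

/-- `τ₂ = (1/2)(1/μ − 1/(λ+2μ))`. -/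
noncomputable def tau2 (lam mu : ℝ) : ℝ := (1 / 2) * (1 / mu - 1 / (lam + 2 * mu))

/-- The Kelvin matrix (elastostatic fundamental solution of the Lamé system):
`G⁰_{ij}(x) = (τ₁/(2π)) δ_{ij} ln|x| − (τ₂/(2π)) x_i x_j / |x|²`. -/
noncomputable def KelvinG0 (lam mu : ℝ) (x : EuclideanSpace ℝ (Fin 2)) :
    Matrix (Fin 2) (Fin 2) ℝ := fun i j =>
  tau1 lam mu / (2 * Real.pi) * (if i = j then Real.log ‖x‖ else 0)
    - tau2 lam mu / (2 * Real.pi) * (x i * x j / ‖x‖ ^ 2)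

/-! ### Arclength of the circle -/

/-- On arcs of angle at most `δ`, chords are almost as long as arcs: the chord is
`2R |sin ((s - t)/2)|`, and `sin u ≥ u - u³/6`. -/
lemma circleMap_dist_lower {R δ s t : ℝ} (hR : 0 < R) (hδ1 : δ ≤ 1) (hst : |s - t| ≤ δ) :
    (1 - δ) * R * |s - t| ≤ dist (circleMap 0 R s) (circleMap 0 R t) := by
  have hfac : circleMap 0 R s - circleMap 0 R t
      = R * Complex.exp (t * Complex.I) * (Complex.exp (Complex.I * ((s - t : ℝ) : ℂ)) - 1) := by
    simp only [circleMap]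
    rw [mul_sub, mul_assoc (R : ℂ), ← Complex.exp_add]
    push_cast
    ring_nf
  have hchord : dist (circleMap 0 R s) (circleMap 0 R t) = R * (2 * |Real.sin ((s - t) / 2)|) := by
    rw [dist_eq_norm, hfac, norm_mul, norm_mul, Complex.norm_exp_ofReal_mul_I,
      Complex.norm_exp_I_mul_ofReal_sub_one]
    simp [abs_of_pos hR]
  rw [hchord]
  rcases eq_or_ne s t with rfl | hne
  · simp
  set u := |s - t| / 2 with hu
  have hupos : 0 < u := by have := abs_pos.2 (sub_ne_zero.2 hne); positivity
  have hsin : |Real.sin ((s - t) / 2)| = |Real.sin u| := by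
    rw [hu]
    rcases abs_choice (s - t) with h | h <;> rw [h]
    rw [neg_div, Real.sin_neg, abs_neg]
  have h1 := Real.sin_gt_sub_cube hupos
  have h2 := le_abs_self (Real.sin u)
  rw [hsin]
  have h3 : |s - t| = 2 * u := by rw [hu]; ring
  rw [h3] at hst ⊢
  have h4 : u ^ 3 / 6 ≤ δ * u := by
    have : u ^ 2 ≤ 6 * δ := by nlinarith
    nlinarith
  nlinarith

/-- Sharp-up-to-`δ` lower bound for the length of the image of a set of angles of diameter at most
`δ`, which need not be measurable. -/
lemma volume_le_of_small {R δ : ℝ} (hR : 0 < R) (hδ1 : δ < 1) {S : Set ℝ}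
    (hS : ∀ s ∈ S, ∀ t ∈ S, |s - t| ≤ δ) :
    volume S ≤ ENNReal.ofReal (((1 - δ) * R)⁻¹) * μH[1] (circleMap 0 R '' S) := by
  have hc : 0 < (1 - δ) * R := mul_pos (by linarith) hR
  have hanti : AntilipschitzWith (((1 - δ) * R)⁻¹).toNNReal
      (fun s : S => circleMap 0 R s) := by
    refine AntilipschitzWith.of_le_mul_dist fun s t => ?_
    rw [Real.coe_toNNReal _ (inv_pos.2 hc).le, Subtype.dist_eq, Real.dist_eq, inv_mul_eq_div,
      le_div_iff₀ hc, mul_comm]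
    exact circleMap_dist_lower hR hδ1.le (hS s s.2 t t.2)
  have h := hanti.le_hausdorffMeasure_image zero_le_one Set.univ
  rw [← isometry_subtype_coe.hausdorffMeasure_image (Or.inl zero_le_one), Set.image_univ,
    Subtype.range_coe, hausdorffMeasure_real, ENNReal.rpow_one] at h
  rw [Set.image_univ] at h
  rwa [ENNReal.ofReal, Set.image_eq_range]

lemma circleMap_injOn {R : ℝ} (hR : 0 < R) :
    Set.InjOn (circleMap 0 R) (Set.Ioc 0 (2 * Real.pi)) := by
  have h := injOn_circleMap_of_abs_sub_le (a := 0) (b := 2 * Real.pi) (c := 0) hR.ne'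
    (by simp [abs_of_pos Real.pi_pos])
  rwa [Set.uIoc_of_le Real.two_pi_pos.le] at h

lemma measurableSet_circleMap_image {R : ℝ} (hR : 0 < R) {S : Set ℝ} (hS : MeasurableSet S)
    (hS2 : S ⊆ Set.Ioc 0 (2 * Real.pi)) : MeasurableSet (circleMap 0 R '' S) :=
  hS.image_of_continuousOn_injOn (continuous_circleMap 0 R).continuousOn
    ((circleMap_injOn hR).mono hS2)

/-- The same bound for every measurable set of angles in one period, obtained by cutting it along
the grid of step `δ`. -/
lemma volume_le_of_delta {R δ : ℝ} (hR : 0 < R) (hδ : 0 < δ) (hδ1 : δ < 1) {S : Set ℝ}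
    (hS : MeasurableSet S) (hS2 : S ⊆ Set.Ioc 0 (2 * Real.pi)) :
    volume S ≤ ENNReal.ofReal (((1 - δ) * R)⁻¹) * μH[1] (circleMap 0 R '' S) := by
  set I : ℤ → Set ℝ := fun n => Set.Ioc (0 + n • δ) (0 + (n + 1) • δ) with hI
  have hcov : S = ⋃ n, S ∩ I n := by
    rw [← Set.inter_iUnion, hI, iUnion_Ioc_add_zsmul hδ, Set.inter_univ]
  have hdisj : Pairwise (Function.onFun Disjoint fun n => S ∩ I n) := fun m n hmn =>
    (Set.pairwise_disjoint_Ioc_add_zsmul 0 δ hmn).mono Set.inter_subset_right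
      Set.inter_subset_right
  have hmeas : ∀ n, MeasurableSet (S ∩ I n) := fun n => hS.inter measurableSet_Ioc
  have himg : μH[1] (circleMap 0 R '' S) = ∑' n, μH[1] (circleMap 0 R '' (S ∩ I n)) := by
    conv_lhs => rw [hcov, Set.image_iUnion]
    refine measure_iUnion (fun m n hmn => ?_) fun n =>
      measurableSet_circleMap_image hR (hmeas n) (Set.inter_subset_left.trans hS2)
    rw [Function.onFun, Set.disjoint_iff_inter_eq_empty,
      ← ((circleMap_injOn hR).mono hS2).image_inter Set.inter_subset_left Set.inter_subset_left,
      (hdisj hmn).inter_eq, Set.image_empty]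
  conv_lhs => rw [hcov]
  rw [measure_iUnion hdisj hmeas, himg, ← ENNReal.tsum_mul_left]
  refine ENNReal.tsum_le_tsum fun n => volume_le_of_small hR hδ1 ?_
  rintro s ⟨-, hs⟩ t ⟨-, ht⟩
  simp only [hI, Set.mem_Ioc, add_zsmul, one_zsmul] at hs ht
  rw [abs_le]
  constructor <;> linarith [hs.1, hs.2, ht.1, ht.2]

lemma hausdorff_circleMap_image {R : ℝ} (hR : 0 < R) {S : Set ℝ}
    (hS : MeasurableSet S) (hS2 : S ⊆ Set.Ioc 0 (2 * Real.pi)) :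
    μH[1] (circleMap 0 R '' S) = ENNReal.ofReal R * volume S := by
  have hupper : μH[1] (circleMap 0 R '' S) ≤ ENNReal.ofReal R * volume S := by
    have h := (lipschitzWith_circleMap 0 R).hausdorffMeasure_image_le zero_le_one S
    rwa [ENNReal.rpow_one, hausdorffMeasure_real, Real.nnabs_of_nonneg hR.le] at h
  refine le_antisymm hupper ?_
  have hvol : volume S ≠ ⊤ := ((measure_mono hS2).trans_lt measure_Ioc_lt_top).ne
  -- Finiteness is what allows the limit `δ → 0` to be taken through a product in `ℝ≥0∞`.
  have hfin : μH[1] (circleMap 0 R '' S) ≠ ⊤ :=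
    (hupper.trans_lt (ENNReal.mul_lt_top ENNReal.ofReal_lt_top hvol.lt_top)).ne
  have hlim : Filter.Tendsto
      (fun δ : ℝ => ENNReal.ofReal (((1 - δ) * R)⁻¹) * μH[1] (circleMap 0 R '' S))
      (nhdsWithin 0 (Set.Ioi 0))
      (nhds (ENNReal.ofReal (((1 - 0) * R)⁻¹) * μH[1] (circleMap 0 R '' S))) := by
    refine ENNReal.Tendsto.mul_const (ENNReal.tendsto_ofReal ?_) (Or.inr hfin)
    have : ContinuousAt (fun δ : ℝ => ((1 - δ) * R)⁻¹) 0 :=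
      ContinuousAt.inv₀ (by fun_prop) (by simpa using hR.ne')
    exact this.tendsto.mono_left nhdsWithin_le_nhds
  have hle : volume S ≤ ENNReal.ofReal (((1 - 0) * R)⁻¹) * μH[1] (circleMap 0 R '' S) := by
    refine ge_of_tendsto hlim ?_
    filter_upwards [Ioo_mem_nhdsGT (zero_lt_one' ℝ)] with δ hδ
    exact volume_le_of_delta hR hδ.1 hδ.2 hS hS2
  calc ENNReal.ofReal R * volume S
      ≤ ENNReal.ofReal R * (ENNReal.ofReal (((1 - 0) * R)⁻¹) * μH[1] (circleMap 0 R '' S)) := by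
        gcongr
    _ = μH[1] (circleMap 0 R '' S) := by
        rw [← mul_assoc, ← ENNReal.ofReal_mul hR.le, sub_zero, one_mul, mul_inv_cancel₀ hR.ne',
          ENNReal.ofReal_one, one_mul]

/-- Arclength on the circle is `R dθ`. -/
lemma hausdorff_restrict_sphere {R : ℝ} (hR : 0 < R) :
    (μH[1] : Measure ℂ).restrict (Metric.sphere 0 R)
      = ENNReal.ofReal R •
        (volume.restrict (Set.Ioc 0 (2 * Real.pi))).map (circleMap 0 R) := by
  ext A hA
  have hm : Measurable (circleMap 0 R) := (continuous_circleMap 0 R).measurable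
  have himg : A ∩ Metric.sphere 0 R
      = circleMap 0 R '' (circleMap 0 R ⁻¹' A ∩ Set.Ioc 0 (2 * Real.pi)) := by
    rw [Set.image_preimage_inter, image_circleMap_Ioc, abs_of_pos hR]
  rw [Measure.restrict_apply hA, himg,
    hausdorff_circleMap_image hR ((hm hA).inter measurableSet_Ioc) Set.inter_subset_right,
    Measure.smul_apply, Measure.map_apply hm hA, Measure.restrict_apply (hm hA), smul_eq_mul]

/-- Integrals over the circle in polar coordinates. The isometry `ℂ ≃ ℝ²` given by
`Complex.orthonormalBasisOneI.repr` preserves `μH[1]`. -/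
lemma setIntegral_sphere_euclidean {R : ℝ} (hR : 0 < R) (f : EuclideanSpace ℝ (Fin 2) → ℝ)
    (hf : ContinuousOn f (Metric.sphere 0 R)) :
    ∫ y in Metric.sphere (0 : EuclideanSpace ℝ (Fin 2)) R, f y ∂μH[1]
      = R * ∫ θ in (0)..(2 * Real.pi), f (Complex.orthonormalBasisOneI.repr (circleMap 0 R θ)) := by
  set e := Complex.orthonormalBasisOneI.repr
  have hpre : e ⁻¹' Metric.sphere (0 : EuclideanSpace ℝ (Fin 2)) R = Metric.sphere 0 R := by
    ext z; simp
  have hmp : MeasurePreserving e (μH[1]) (μH[1]) :=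
    e.toIsometryEquiv.measurePreserving_hausdorffMeasure 1
  have hemb : MeasurableEmbedding e := e.toHomeomorph.measurableEmbedding
  rw [← hmp.setIntegral_preimage_emb hemb, hpre, hausdorff_restrict_sphere hR,
    integral_smul_measure, ENNReal.toReal_ofReal hR.le, smul_eq_mul,
    intervalIntegral.integral_of_le Real.two_pi_pos.le]
  congr 1
  refine integral_map (continuous_circleMap 0 R).aemeasurable ?_
  have hcont : ContinuousOn (fun z : ℂ => f (e z)) (Metric.sphere 0 R) :=
    hf.comp e.continuous.continuousOn fun z hz => by simpa using hz
  have hae := hcont.aestronglyMeasurable (μ := μH[1]) Metric.isClosed_sphere.measurableSet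
  rw [hausdorff_restrict_sphere hR] at hae
  exact hae.mono_ac (Measure.absolutelyContinuous_smul (ENNReal.ofReal_pos.2 hR).ne')

/-- Needed for integrability: `μH[1]` is not locally finite on the plane, so compactness of the circle
alone does not suffice. -/
lemma hausdorff_sphere_ne_top {R : ℝ} (hR : 0 < R) :
    μH[1] (Metric.sphere (0 : EuclideanSpace ℝ (Fin 2)) R) ≠ ⊤ := by
  set e := Complex.orthonormalBasisOneI.repr
  have himg : Metric.sphere (0 : EuclideanSpace ℝ (Fin 2)) R = e '' Metric.sphere 0 R := by
    rw [e.image_sphere, map_zero]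
  rw [himg, e.isometry.hausdorffMeasure_image (Or.inl zero_le_one), ← abs_of_pos hR,
    ← image_circleMap_Ioc, hausdorff_circleMap_image hR measurableSet_Ioc le_rfl]
  exact (ENNReal.mul_lt_top ENNReal.ofReal_lt_top measure_Ioc_lt_top).ne

/-! ### Two circle averages -/

lemma sub_circleMap_ne_zero {R : ℝ} (hR : 0 < R) {a : ℂ} (ha : ‖a‖ < R) (θ : ℝ) :
    a - circleMap 0 R θ ≠ 0 := by
  intro h
  rw [sub_eq_zero.1 h, norm_circleMap_zero, abs_of_pos hR] at ha
  exact ha.false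

lemma integral_log_norm_sub_circleMap {R : ℝ} (hR : 0 < R) {a : ℂ} (ha : ‖a‖ < R) :
    ∫ θ in (0)..(2 * Real.pi), Real.log ‖a - circleMap 0 R θ‖ = 2 * Real.pi * Real.log R := by
  have h := circleAverage_log_norm_sub_const_of_mem_closedBall (a := a) (c := 0) (R := R)
    (by simpa [abs_of_pos hR] using ha.le)
  rw [Real.circleAverage_def, smul_eq_mul, inv_mul_eq_iff_eq_mul₀ Real.two_pi_pos.ne'] at h
  simpa only [norm_sub_rev] using h

/-- The mean of `w / conj w` over the circle vanishes, by the mean value property. -/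
lemma integral_div_conj_sub_circleMap {R : ℝ} (hR : 0 < R) {a : ℂ} (ha : ‖a‖ < R) :
    ∫ θ in (0)..(2 * Real.pi),
      (a - circleMap 0 R θ) / (starRingEnd ℂ) (a - circleMap 0 R θ) = 0 := by
  -- On the circle, `conj y = R² / y` turns the integrand into this holomorphic function of `y`.
  set F : ℂ → ℂ := fun y => (a - y) * y / ((starRingEnd ℂ) a * y - R ^ 2)
  have hden : ∀ y ∈ Metric.closedBall (0 : ℂ) |R|, (starRingEnd ℂ) a * y - R ^ 2 ≠ 0 := by
    intro y hy h
    rw [mem_closedBall_zero_iff, abs_of_pos hR] at hy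
    have h2 := congrArg norm (sub_eq_zero.1 h)
    simp only [norm_mul, RCLike.norm_conj, norm_pow, Complex.norm_real, Real.norm_eq_abs,
      abs_of_pos hR] at h2
    nlinarith [norm_nonneg a, norm_nonneg y]
  have hF : DifferentiableOn ℂ F (Metric.closedBall 0 |R|) := by
    intro y hy
    have := hden y hy
    exact (by fun_prop (disch := assumption) : DifferentiableAt ℂ F y).differentiableWithinAt
  have hcl : DiffContOnCl ℂ F (Metric.ball 0 |R|) :=
    (hF.mono Metric.closure_ball_subset_closedBall).diffContOnCl
  have h := hcl.circleAverage
  rw [show F 0 = 0 by simp [F], Real.circleAverage_def,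
    smul_eq_zero_iff_right (inv_ne_zero Real.two_pi_pos.ne')] at h
  refine (intervalIntegral.integral_congr fun θ _ => ?_).trans h
  have hy : circleMap 0 R θ * (starRingEnd ℂ) (circleMap 0 R θ) = R ^ 2 := by
    rw [Complex.mul_conj, Complex.normSq_eq_norm_sq, norm_circleMap_zero, sq_abs]
    push_cast; rfl
  have hy0 : circleMap 0 R θ ≠ 0 := circleMap_ne_center hR.ne'
  simp only [F]
  rw [← hy, show (starRingEnd ℂ) a * circleMap 0 R θ
      - circleMap 0 R θ * (starRingEnd ℂ) (circleMap 0 R θ)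
      = (starRingEnd ℂ) (a - circleMap 0 R θ) * circleMap 0 R θ by rw [map_sub]; ring,
    mul_div_mul_right _ _ hy0]

/-! ### The Kelvin matrix in complex coordinates -/

/-- With `q = w / conj w`, one has `w ⊗ w / |w|² = (1/2) (I + !![Re q, Im q; Im q, -Re q])`. -/
lemma kelvinG0_repr (lam mu : ℝ) {w : ℂ} (hw : w ≠ 0) (i j : Fin 2) :
    KelvinG0 lam mu (Complex.orthonormalBasisOneI.repr w) i j
      = (if i = j then tau1 lam mu / (2 * Real.pi) * Real.log ‖w‖
            - tau2 lam mu / (4 * Real.pi) else 0)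
        - tau2 lam mu / (4 * Real.pi) *
          (!![(w / (starRingEnd ℂ) w).re, (w / (starRingEnd ℂ) w).im;
              (w / (starRingEnd ℂ) w).im, -(w / (starRingEnd ℂ) w).re] i j) := by
  have hq : w / (starRingEnd ℂ) w = w ^ 2 / (‖w‖ ^ 2 : ℝ) := by
    rw [← Complex.normSq_eq_norm_sq, Complex.normSq_eq_conj_mul_self, pow_two,
      mul_div_mul_right _ _ hw]
  have hn : ‖w‖ ^ 2 = w.re ^ 2 + w.im ^ 2 := by
    rw [← Complex.normSq_eq_norm_sq, Complex.normSq_apply]; ring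
  have hn0 : w.re ^ 2 + w.im ^ 2 ≠ 0 := by rw [← hn]; positivity
  have h0 : Complex.orthonormalBasisOneI.repr w 0 = w.re := rfl
  have h1 : Complex.orthonormalBasisOneI.repr w 1 = w.im := rfl
  rw [hq, Complex.div_ofReal_re, Complex.div_ofReal_im, KelvinG0, LinearIsometryEquiv.norm_map, hn]
  have := Real.pi_ne_zero
  fin_cases i <;> fin_cases j <;> simp [h0, h1, pow_two (M := ℂ)] <;> field_simp <;> ring

lemma continuousOn_kelvinG0 (lam mu : ℝ) (i j : Fin 2) :
    ContinuousOn (fun z => KelvinG0 lam mu z i j) {0}ᶜ := by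
  intro z hz
  have hz' : ‖z‖ ≠ 0 := norm_ne_zero_iff.2 hz
  have hz2 : ‖z‖ ^ 2 ≠ 0 := pow_ne_zero 2 hz'
  apply ContinuousAt.continuousWithinAt
  unfold KelvinG0
  split_ifs <;> fun_prop (disch := assumption)

lemma continuousOn_kelvinG0_sub {R : ℝ} (lam mu : ℝ) {x : EuclideanSpace ℝ (Fin 2)}
    (hx : x ∈ Metric.ball (0 : EuclideanSpace ℝ (Fin 2)) R) (i j : Fin 2) :
    ContinuousOn (fun y => KelvinG0 lam mu (x - y) i j) (Metric.sphere 0 R) := by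
  refine (continuousOn_kelvinG0 lam mu i j).comp (by fun_prop) fun y hy h => ?_
  rw [Set.mem_singleton_iff, sub_eq_zero] at h
  subst h
  exact (Metric.mem_ball.1 hx).ne hy

/-- The integral of the Kelvin matrix over the circle, entry by entry. -/
lemma setIntegral_kelvinG0 {R : ℝ} (hR : 0 < R) (lam mu : ℝ) {x : EuclideanSpace ℝ (Fin 2)}
    (hx : x ∈ Metric.ball (0 : EuclideanSpace ℝ (Fin 2)) R) (i j : Fin 2) :
    ∫ y in Metric.sphere (0 : EuclideanSpace ℝ (Fin 2)) R, KelvinG0 lam mu (x - y) i j ∂μH[1]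
      = if i = j then tau1 lam mu * R * Real.log R - tau2 lam mu / 2 * R else 0 := by
  rw [setIntegral_sphere_euclidean hR _ (continuousOn_kelvinG0_sub lam mu hx i j)]
  obtain ⟨a, rfl⟩ := Complex.orthonormalBasisOneI.repr.surjective x
  have ha : ‖a‖ < R := by simpa using hx
  have hne := sub_circleMap_ne_zero hR ha
  simp only [← map_sub, kelvinG0_repr lam mu (hne _)]
  set q : ℝ → ℂ := fun θ => (a - circleMap 0 R θ) / (starRingEnd ℂ) (a - circleMap 0 R θ) with hq
  have hqc : Continuous q :=
    Continuous.div (by fun_prop) (by fun_prop) fun θ => (map_ne_zero _).2 (hne θ)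
  have hqi : IntervalIntegrable q volume 0 (2 * Real.pi) := hqc.intervalIntegrable _ _
  have hq0 : ∫ θ in (0)..(2 * Real.pi), q θ = 0 := integral_div_conj_sub_circleMap hR ha
  have hre : ∫ θ in (0)..(2 * Real.pi), (q θ).re = 0 := by
    have := Complex.reCLM.intervalIntegral_comp_comm hqi
    simpa [hq0] using this
  have him : ∫ θ in (0)..(2 * Real.pi), (q θ).im = 0 := by
    have := Complex.imCLM.intervalIntegral_comp_comm hqi
    simpa [hq0] using this
  have hlogc : Continuous fun θ => Real.log ‖a - circleMap 0 R θ‖ :=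
    Continuous.log (by fun_prop) fun θ => norm_ne_zero_iff.2 (hne θ)
  have hrec : Continuous fun θ => (q θ).re := by fun_prop
  have himc : Continuous fun θ => (q θ).im := by fun_prop
  have hdiag : ∫ θ in (0)..(2 * Real.pi), (tau1 lam mu / (2 * Real.pi) *
      Real.log ‖a - circleMap 0 R θ‖ - tau2 lam mu / (4 * Real.pi))
      = tau1 lam mu * Real.log R - tau2 lam mu / 2 := by
    rw [intervalIntegral.integral_sub ((hlogc.const_mul _).intervalIntegrable _ _) (by simp),
      intervalIntegral.integral_const_mul, integral_log_norm_sub_circleMap hR ha]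
    have := Real.pi_ne_zero
    simp
    field_simp
    ring
  -- The trace-free part has mean zero, so only the multiple of the identity survives.
  have key : ∀ f g : ℝ → ℝ, Continuous f → Continuous g → ∫ θ in (0)..(2 * Real.pi), g θ = 0 →
      ∫ θ in (0)..(2 * Real.pi), (f θ - tau2 lam mu / (4 * Real.pi) * g θ)
        = ∫ θ in (0)..(2 * Real.pi), f θ := by
    intro f g hf hg h0
    rw [intervalIntegral.integral_sub (hf.intervalIntegrable _ _)
      ((hg.const_mul _).intervalIntegrable _ _), intervalIntegral.integral_const_mul, h0]
    simp
  have hpart : ∫ θ in (0)..(2 * Real.pi),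
      !![(q θ).re, (q θ).im; (q θ).im, -(q θ).re] i j = 0 := by
    fin_cases i <;> fin_cases j <;> simp [hre, him]
  have hpc : Continuous fun θ => !![(q θ).re, (q θ).im; (q θ).im, -(q θ).re] i j := by
    fin_cases i <;> fin_cases j <;> simp <;> fun_prop
  rw [key _ _ ?_ hpc hpart]
  · split_ifs
    · rw [hdiag]; ring
    · simp
  · split_ifs <;> fun_prop

/-- Inside the disk of radius `R`, the single-layer potential of the Kelvin matrix acts on
constant densities as multiplication by the scalar `τ₁ R ln R − (τ₂/2) R`. -/
theorem kelvin_single_layer_constant (R lam mu : ℝ) (hR : 0 < R)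
    (hmu : 0 < mu) (hlm : 0 < lam + mu)
    (v : Fin 2 → ℝ) (x : EuclideanSpace ℝ (Fin 2))
    (hx : x ∈ Metric.ball (0 : EuclideanSpace ℝ (Fin 2)) R) :
    (∫ y in Metric.sphere (0 : EuclideanSpace ℝ (Fin 2)) R,
        (KelvinG0 lam mu (x - y)).mulVec v ∂μH[1])
      = (tau1 lam mu * R * Real.log R - tau2 lam mu / 2 * R) • v := by
  have hint : ∀ i j, IntegrableOn (fun y => KelvinG0 lam mu (x - y) i j)
      (Metric.sphere (0 : EuclideanSpace ℝ (Fin 2)) R) μH[1] := fun i j =>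
    (continuousOn_kelvinG0_sub lam mu hx i j).integrableOn_of_subset_isCompact
      (isCompact_sphere 0 R) Metric.isClosed_sphere.measurableSet le_rfl
      (hausdorff_sphere_ne_top hR)
  have hterm : ∀ i j, Integrable (fun y => KelvinG0 lam mu (x - y) i j * v j)
      (μH[1].restrict (Metric.sphere (0 : EuclideanSpace ℝ (Fin 2)) R)) := fun i j =>
    (hint i j).mul_const _
  ext i
  rw [eval_integral fun i => by
    simpa only [Matrix.mulVec, dotProduct] using integrable_finsetSum _ fun j _ => hterm i j]
  simp only [Matrix.mulVec, dotProduct]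
  rw [integral_finsetSum _ fun j _ => hterm i j]
  simp [integral_mul_const, setIntegral_kelvinG0 hR lam mu hx]
end

section
/- For every s > 0 one has τ₁ R ln R − (τ₂/2) R + 2πR β_s ≠ 0, and, setting t = 1/(τ₁ R ln R − (τ₂/2) R + 2πR β_s) ∈ ℂ, for every x ∈ ∂D and each i ∈ {1,2} the identity t · ( ∫_{∂D} G⁰(x − y) e_i dσ(y) + 2πR β_s e_i ) = e_i holds in ℂ², where e₁ = (1,0), e₂ = (0,1); that is, the leading-order single-layer operator Ŝ^s_D : φ ↦ ∫_{∂D} G⁰(· − y) φ(y) dσ(y) + β_s ∫_{∂D} φ dσ satisfies Ŝ^s_D[t e_i] = e_i on ∂D, so (Ŝ^s_D)^{-1}[e_i] = t e_i. -/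
/-! The single-layer potential of a constant density on the circle is computed explicitly, and the
invertibility of the resulting scalar is read off its imaginary part.

*Arclength.* The measure `μH[1]` on the circle is the image of `R dθ` on `(0, 2π]` under
`θ ↦ (R cos θ, R sin θ)` (`restrict_sphere_eq_map`). The chord has length
`2 R |sin ((a - b) / 2)|`, which is at most `R |a - b|`, and at least `r R |a - b|` on short arcs for
any given `r < 1`. The first bound gives `μH[1] (image of A) ≤ R · volume A`; the second, applied to
the pieces of `A` in a countable partition of the line into short intervals and followed by `r → 1`,
gives the reverse inequality.

*Kelvin matrix.* For `x` at angle `α` and `y` at angle `θ`, the vector `x - y` is parallel to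
`(-sin ((α + θ) / 2), cos ((α + θ) / 2))`, so `(x - y)ᵢ (x - y)ⱼ / |x - y|²` is a trigonometric
function of `α + θ` whose integral over a period is `π δᵢⱼ` (`integral_chordDir`). The mean of
`log |x - y|` over the circle is `log R`, by Jensen's formula (`log_chord`). Hence `S[eᵢ]` equals
`(τ₁ R log R - τ₂ R / 2) eᵢ` on the circle (`SLc_single`).

*Non-vanishing.* The scalar `τ₁ R log R - τ₂ R / 2 + 2πR β_s` has imaginary part `-π τ₁ R / 2`,
which is nonzero because `τ₁ > 0`.
-/

open MeasureTheory

/-- The constant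
`β_k = (τ₁/(4π))(2γ − πi − ln 4) + τ₂/(4π) + ln(k/√(λ+2μ))/(4π(λ+2μ)) + ln(k/√μ)/(4πμ)`,
with `γ` the Euler–Mascheroni constant. -/
noncomputable def betaK (lam mu k : ℝ) : ℂ :=
  (tau1 lam mu / (4 * Real.pi) : ℝ) *
      (2 * (Real.eulerMascheroniConstant : ℂ) - Real.pi * Complex.I - (Real.log 4 : ℝ))
    + (tau2 lam mu / (4 * Real.pi) : ℝ)
    + (Real.log (k / Real.sqrt (lam + 2 * mu)) / (4 * Real.pi * (lam + 2 * mu)) : ℝ)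
    + (Real.log (k / Real.sqrt mu) / (4 * Real.pi * mu) : ℝ)

/-- The single-layer potential of the Kelvin matrix on the circle of radius `R` applied
to a constant density `v`, complexified componentwise. -/
noncomputable def SLc (lam mu R : ℝ) (x : EuclideanSpace ℝ (Fin 2)) (v : Fin 2 → ℝ) :
    Fin 2 → ℂ := fun i =>
  ((∫ y in Metric.sphere (0 : EuclideanSpace ℝ (Fin 2)) R,
      (KelvinG0 lam mu (x - y)).mulVec v ∂μH[1]) i : ℂ)

/-! ### Arclength measure on the circle -/

/-- The arclength-proportional parametrization `θ ↦ (R cos θ, R sin θ)` of the circle of radius `R`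
centred at the origin. -/
noncomputable def circlePt (R θ : ℝ) : EuclideanSpace ℝ (Fin 2) :=
  !₂[R * Real.cos θ, R * Real.sin θ]

/-- The chord between two points of the circle, by the sum-to-product formulas. -/
lemma circlePt_sub (R a b : ℝ) :
    (circlePt R a - circlePt R b) 0 = -(2 * R * Real.sin ((a - b) / 2)) * Real.sin ((a + b) / 2) ∧
    (circlePt R a - circlePt R b) 1 = 2 * R * Real.sin ((a - b) / 2) * Real.cos ((a + b) / 2) := by
  constructor
  · have := Real.cos_sub_cos a b
    simp only [circlePt, PiLp.sub_apply, Matrix.cons_val_zero]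
    linear_combination R * this
  · have := Real.sin_sub_sin a b
    simp only [circlePt, PiLp.sub_apply, Matrix.cons_val_one, Matrix.cons_val_zero]
    linear_combination R * this

lemma norm_circlePt_sub {R : ℝ} (hR : 0 < R) (a b : ℝ) :
    ‖circlePt R a - circlePt R b‖ = 2 * R * |Real.sin ((a - b) / 2)| := by
  rw [EuclideanSpace.norm_eq, Fin.sum_univ_two, (circlePt_sub R a b).1, (circlePt_sub R a b).2]
  simp only [Real.norm_eq_abs, sq_abs]
  rw [show ∀ u : ℝ, 2 * R * |u| = |2 * R * u| from fun u => by
    rw [abs_mul, abs_of_pos (by positivity : 0 < 2 * R)], ← Real.sqrt_sq_eq_abs]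
  congr 1
  linear_combination (2 * R * Real.sin ((a - b) / 2)) ^ 2 *
    Real.sin_sq_add_cos_sq ((a + b) / 2)

lemma norm_circleMap_sub (R a b : ℝ) :
    ‖circleMap 0 R b - circleMap 0 R a‖ = ‖circlePt R a - circlePt R b‖ := by
  rw [EuclideanSpace.norm_eq, Complex.norm_def, Complex.normSq_apply]
  congr 1
  simp [circleMap, circlePt, Fin.sum_univ_two]
  ring

lemma continuous_circlePt (R : ℝ) : Continuous (circlePt R) := by
  unfold circlePt
  fun_prop

lemma injOn_circlePt {R : ℝ} (hR : 0 < R) : Set.InjOn (circlePt R) (Set.Ioc 0 (2 * Real.pi)) := by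
  intro a ha b hb h
  have h1 := norm_circleMap_sub R a b
  rw [h, sub_self, norm_zero, norm_eq_zero, sub_eq_zero] at h1
  exact (injOn_circleMap_of_abs_sub_le (a := 0) (b := 2 * Real.pi) (c := 0) hR.ne'
    (by simp [abs_of_pos Real.pi_pos])) (by rwa [Set.uIoc_of_le (by positivity)])
      (by rwa [Set.uIoc_of_le (by positivity)]) h1.symm

lemma image_circlePt {R : ℝ} (hR : 0 < R) :
    circlePt R '' Set.Ioc 0 (2 * Real.pi) = Metric.sphere 0 R := by
  ext x
  simp only [Set.mem_image, mem_sphere_zero_iff_norm]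
  constructor
  · rintro ⟨θ, -, rfl⟩
    rw [EuclideanSpace.norm_eq, Fin.sum_univ_two]
    simp only [circlePt, PiLp.toLp_apply, Matrix.cons_val_zero, Matrix.cons_val_one,
      Real.norm_eq_abs, sq_abs]
    rw [show (R * Real.cos θ) ^ 2 + (R * Real.sin θ) ^ 2 = R ^ 2 by
      linear_combination R ^ 2 * Real.sin_sq_add_cos_sq θ, Real.sqrt_sq hR.le]
  · intro hx
    have hz : (⟨x 0, x 1⟩ : ℂ) ∈ Metric.sphere (0 : ℂ) |R| := by
      rw [mem_sphere_zero_iff_norm, abs_of_pos hR, ← hx, EuclideanSpace.norm_eq, Complex.norm_def,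
        Complex.normSq_apply]
      congr 1
      simp [Fin.sum_univ_two]
      ring
    rw [← image_circleMap_Ioc] at hz
    obtain ⟨θ, hθ, h⟩ := hz
    refine ⟨θ, hθ, ?_⟩
    have h0 := congrArg Complex.re h
    have h1 := congrArg Complex.im h
    simp [circleMap] at h0 h1
    ext i
    fin_cases i
    · simpa [circlePt] using h0
    · simpa [circlePt] using h1

/-- The Lipschitz estimate of the chord by the arc bounds the Hausdorff measure from above. -/
lemma hausdorff_image_circlePt_le {R : ℝ} (hR : 0 < R) (A : Set ℝ) :
    μH[1] (circlePt R '' A) ≤ ENNReal.ofReal R * volume A := by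
  have hL : LipschitzWith R.toNNReal (circlePt R) := by
    refine LipschitzWith.of_dist_le_mul fun a b => ?_
    rw [dist_eq_norm, norm_circlePt_sub hR, Real.coe_toNNReal _ hR.le, Real.dist_eq]
    have := Real.abs_sin_le_abs (x := (a - b) / 2)
    rw [abs_div, abs_two] at this
    nlinarith
  have := hL.hausdorffMeasure_image_le (zero_le_one' ℝ) A
  rwa [ENNReal.rpow_one, hausdorffMeasure_real] at this

lemma exists_mul_abs_le_abs_sin {r : ℝ} (hr : r < 1) :
    ∃ δ > 0, ∀ x, |x| ≤ δ → r * |x| ≤ |Real.sin x| := by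
  have key : ∀ᶠ x in nhds (0 : ℝ),
      ‖Real.sin x - Real.sin 0 - (x - 0) * Real.cos 0‖ ≤ (1 - r) * ‖x - 0‖ := by
    have := (Real.hasDerivAt_sin 0).isLittleO.def (sub_pos.2 hr)
    simpa using this
  obtain ⟨δ, hδ, h⟩ := Metric.eventually_nhds_iff.1 key
  refine ⟨δ / 2, by positivity, fun x hx => ?_⟩
  have h2 := h (y := x) (by rw [Real.dist_0_eq_abs]; linarith)
  simp only [Real.sin_zero, Real.cos_zero, sub_zero, mul_one, Real.norm_eq_abs] at h2
  have h3 := abs_sub_abs_le_abs_sub x (Real.sin x)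
  rw [abs_sub_comm] at h3
  linarith

/-- On short arcs the inverse of the parametrization is Lipschitz with constant close to `1 / R`. -/
lemma exists_small_arc {R r : ℝ} (hR : 0 < R) (hr0 : 0 < r) (hr : r < 1) :
    ∃ δ > 0, ∀ (c : ℝ) (A : Set ℝ), A ⊆ Set.Ioc c (c + δ) →
      ENNReal.ofReal (r * R) * volume A ≤ μH[1] (circlePt R '' A) := by
  obtain ⟨δ, hδ, h⟩ := exists_mul_abs_le_abs_sin hr
  refine ⟨δ, hδ, fun c A hA => ?_⟩
  have hd : ∀ a ∈ A, ∀ b ∈ A, r * R * |a - b| ≤ ‖circlePt R a - circlePt R b‖ := by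
    intro a ha b hb
    have ha := hA ha
    have hb := hA hb
    have h1 := h ((a - b) / 2) (by
      rw [abs_le]; constructor <;> linarith [ha.1, ha.2, hb.1, hb.2])
    rw [abs_div, abs_two] at h1
    rw [norm_circlePt_sub hR]
    nlinarith
  have hrR : 0 < r * R := mul_pos hr0 hR
  have hinj : Set.InjOn (circlePt R) A := by
    intro a ha b hb hab
    have := hd a ha b hb
    rw [hab, sub_self, norm_zero] at this
    exact sub_eq_zero.1 (abs_nonpos_iff.1 (nonpos_of_mul_nonpos_right this hrR))
  have hlip : LipschitzOnWith (r * R)⁻¹.toNNReal (Function.invFunOn (circlePt R) A)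
      (circlePt R '' A) := by
    refine LipschitzOnWith.of_dist_le_mul ?_
    rintro _ ⟨a, ha, rfl⟩ _ ⟨b, hb, rfl⟩
    rw [hinj.leftInvOn_invFunOn ha, hinj.leftInvOn_invFunOn hb, Real.coe_toNNReal _ (by positivity),
      Real.dist_eq, dist_eq_norm, inv_mul_eq_div, le_div_iff₀ hrR, mul_comm]
    exact hd a ha b hb
  have := hlip.hausdorffMeasure_image_le (zero_le_one' ℝ)
  rw [hinj.leftInvOn_invFunOn.image_image, ENNReal.rpow_one, hausdorffMeasure_real] at this
  calc ENNReal.ofReal (r * R) * volume A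
      ≤ ENNReal.ofReal (r * R) * (ENNReal.ofReal (r * R)⁻¹ * μH[1] (circlePt R '' A)) := by
        gcongr; exact this
    _ = μH[1] (circlePt R '' A) := by
        rw [← mul_assoc, ← ENNReal.ofReal_mul hrR.le, mul_inv_cancel₀ hrR.ne', ENNReal.ofReal_one,
          one_mul]

/-- Arclength on the circle, computed in the angular parametrization. -/
lemma hausdorff_image_circlePt {R : ℝ} (hR : 0 < R) {A : Set ℝ} (hA : MeasurableSet A)
    (hsub : A ⊆ Set.Ioc 0 (2 * Real.pi)) :
    μH[1] (circlePt R '' A) = ENNReal.ofReal R * volume A := by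
  refine le_antisymm (hausdorff_image_circlePt_le hR A) ?_
  have hinj := (injOn_circlePt hR).mono hsub
  have key : ∀ r ∈ Set.Ioo (0 : ℝ) 1,
      ENNReal.ofReal (r * R) * volume A ≤ μH[1] (circlePt R '' A) := by
    rintro r ⟨hr0, hr1⟩
    obtain ⟨δ, hδ, h⟩ := exists_small_arc hR hr0 hr1
    -- cut `A` into pieces lying in short arcs
    set I : ℤ → Set ℝ := fun n => A ∩ Set.Ioc (n • δ) ((n + 1) • δ) with hI
    have hU : ⋃ n, I n = A := by
      rw [hI, ← Set.inter_iUnion, iUnion_Ioc_zsmul hδ, Set.inter_univ]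
    have hm : ∀ n, MeasurableSet (I n) := fun n => hA.inter measurableSet_Ioc
    have hdisj : Pairwise (Function.onFun Disjoint I) := fun m n hmn =>
      (Set.pairwise_disjoint_Ioc_zsmul δ hmn).mono Set.inter_subset_right Set.inter_subset_right
    have hIA : ∀ n, I n ⊆ A := fun n => Set.inter_subset_left
    have hdisj' : Pairwise (Function.onFun Disjoint fun n => circlePt R '' I n) := fun m n hmn =>
      Set.disjoint_image_image fun a ha b hb hab =>
        (hdisj hmn).ne_of_mem ha hb (hinj (hIA _ ha) (hIA _ hb) hab)
    have hm' : ∀ n, MeasurableSet (circlePt R '' I n) := fun n =>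
      (hm n).image_of_continuousOn_injOn (continuous_circlePt R).continuousOn (hinj.mono (hIA n))
    calc ENNReal.ofReal (r * R) * volume A
        = ∑' n, ENNReal.ofReal (r * R) * volume (I n) := by
          rw [ENNReal.tsum_mul_left, ← measure_iUnion hdisj hm, hU]
      _ ≤ ∑' n, μH[1] (circlePt R '' I n) := by
          refine ENNReal.tsum_le_tsum fun n => h (n • δ) _ ?_
          intro x hx
          have := hx.2
          rwa [add_smul, one_smul] at this
      _ = μH[1] (circlePt R '' A) := by
          rw [← measure_iUnion hdisj' hm', ← Set.image_iUnion, hU]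
  have hlim : Filter.Tendsto (fun r : ℝ => ENNReal.ofReal (r * R) * volume A)
      (nhdsWithin 1 (Set.Iio 1)) (nhds (ENNReal.ofReal (1 * R) * volume A)) := by
    refine ENNReal.Tendsto.mul_const ?_ (Or.inl (by simpa using hR))
    exact ENNReal.tendsto_ofReal
      (((continuous_id.mul continuous_const).tendsto' _ _ rfl).mono_left nhdsWithin_le_nhds)
  rw [one_mul] at hlim
  -- the constants `r R` of the short-arc estimate increase to `R`
  refine le_of_tendsto hlim ?_
  filter_upwards [Ioo_mem_nhdsLT zero_lt_one] with r hr using key r hr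

/-- Arclength measure on the circle is the image of `R dθ` on `(0, 2π]`. -/
lemma restrict_sphere_eq_map {R : ℝ} (hR : 0 < R) :
    (μH[1] : Measure (EuclideanSpace ℝ (Fin 2))).restrict (Metric.sphere 0 R) =
      (ENNReal.ofReal R • volume.restrict (Set.Ioc 0 (2 * Real.pi))).map (circlePt R) := by
  have hc := (continuous_circlePt R).measurable
  ext B hB
  rw [Measure.restrict_apply hB, Measure.map_apply hc hB, Measure.smul_apply,
    Measure.restrict_apply (hc hB), smul_eq_mul,
    ← hausdorff_image_circlePt hR ((hc hB).inter measurableSet_Ioc) Set.inter_subset_right,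
    Set.image_preimage_inter, image_circlePt hR]

lemma integral_sphere {R : ℝ} (hR : 0 < R) {E : Type*} [NormedAddCommGroup E] [NormedSpace ℝ E]
    {F : EuclideanSpace ℝ (Fin 2) → E} (hF : StronglyMeasurable F) :
    ∫ y in Metric.sphere (0 : EuclideanSpace ℝ (Fin 2)) R, F y ∂μH[1] =
      R • ∫ θ in (0)..(2 * Real.pi), F (circlePt R θ) := by
  rw [restrict_sphere_eq_map hR, integral_map (continuous_circlePt R).aemeasurable
    hF.aestronglyMeasurable, integral_smul_measure, ENNReal.toReal_ofReal hR.le,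
    intervalIntegral.integral_of_le (by positivity)]

/-! ### The two parts of the Kelvin potential -/

/-- The unit vector orthogonal to the bisector of the directions `α` and `θ`; it spans the chord
joining the corresponding points of the circle. -/
noncomputable def chordDir (α θ : ℝ) : Fin 2 → ℝ :=
  ![-Real.sin ((α + θ) / 2), Real.cos ((α + θ) / 2)]

lemma ae_sin_ne_zero (α : ℝ) : ∀ᵐ θ : ℝ, Real.sin ((α - θ) / 2) ≠ 0 := by
  have : (Set.range fun n : ℤ => α - 2 * (n * Real.pi)).Countable := Set.countable_range _
  filter_upwards [this.ae_notMem volume] with θ hθ h0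
  obtain ⟨n, hn⟩ := Real.sin_eq_zero_iff.1 h0
  exact hθ ⟨n, by simp only; linarith⟩

/-- The rank-one part of the Kelvin matrix sees only the direction of the chord. The null set
`θ ≡ α`, where the quotient takes the junk value `0`, is discarded. -/
lemma ae_chord_eq {R : ℝ} (hR : 0 < R) (α : ℝ) (i j : Fin 2) :
    ∀ᵐ θ : ℝ, (circlePt R α - circlePt R θ) i * (circlePt R α - circlePt R θ) j /
      ‖circlePt R α - circlePt R θ‖ ^ 2 = chordDir α θ i * chordDir α θ j := by
  filter_upwards [ae_sin_ne_zero α] with θ hθ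
  obtain ⟨h0, h1⟩ := circlePt_sub R α θ
  rw [norm_circlePt_sub hR, mul_pow, sq_abs]
  fin_cases i <;> fin_cases j <;>
    simp only [Fin.zero_eta, Fin.mk_one, h0, h1, chordDir, Matrix.cons_val_zero,
      Matrix.cons_val_one] <;> field_simp

lemma integral_chordDir (α : ℝ) (i j : Fin 2) :
    ∫ θ in (0)..(2 * Real.pi), chordDir α θ i * chordDir α θ j = if i = j then Real.pi else 0 := by
  have hc : ∫ θ in (0)..(2 * Real.pi), Real.cos (α + θ) = 0 := by
    rw [intervalIntegral.integral_comp_add_left (fun t => Real.cos t), integral_cos]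
    simp
  have hs : ∫ θ in (0)..(2 * Real.pi), Real.sin (α + θ) = 0 := by
    rw [intervalIntegral.integral_comp_add_left (fun t => Real.sin t), integral_sin]
    simp
  have hcc : ∀ θ, Real.cos (α + θ) = 2 * Real.cos ((α + θ) / 2) ^ 2 - 1 := fun θ => by
    rw [← Real.cos_two_mul]; congr 1; ring
  have hss : ∀ θ, Real.sin (α + θ) = 2 * Real.sin ((α + θ) / 2) * Real.cos ((α + θ) / 2) :=
    fun θ => by rw [← Real.sin_two_mul]; congr 1; ring
  have hi : IntervalIntegrable (fun θ => Real.cos (α + θ) / 2) volume 0 (2 * Real.pi) :=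
    (by fun_prop : Continuous fun θ => Real.cos (α + θ) / 2).intervalIntegrable _ _
  have hc2 : ∫ θ in (0)..(2 * Real.pi), Real.cos (α + θ) / 2 = 0 := by
    rw [intervalIntegral.integral_div, hc, zero_div]
  have h00 : ∀ θ, chordDir α θ 0 * chordDir α θ 0 = 1 / 2 - Real.cos (α + θ) / 2 := fun θ => by
    simp only [chordDir, Matrix.cons_val_zero, hcc]
    linear_combination Real.sin_sq_add_cos_sq ((α + θ) / 2)
  have h11 : ∀ θ, chordDir α θ 1 * chordDir α θ 1 = 1 / 2 + Real.cos (α + θ) / 2 := fun θ => by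
    simp only [chordDir, Matrix.cons_val_one, Matrix.cons_val_zero, hcc]
    ring
  have h01 : ∀ θ, chordDir α θ 0 * chordDir α θ 1 = -(Real.sin (α + θ) / 2) := fun θ => by
    simp only [chordDir, Matrix.cons_val_one, Matrix.cons_val_zero, hss]
    ring
  fin_cases i <;> fin_cases j <;> simp only [Fin.zero_eta, Fin.mk_one]
  · simp only [h00]
    rw [intervalIntegral.integral_sub (by simp) hi, hc2]
    simp
    ring
  · simp only [h01]
    rw [intervalIntegral.integral_neg, intervalIntegral.integral_div, hs]
    simp
  · simp only [mul_comm (chordDir _ _ 1), h01]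
    rw [intervalIntegral.integral_neg, intervalIntegral.integral_div, hs]
    simp
  · simp only [h11]
    rw [intervalIntegral.integral_add (by simp) hi, hc2]
    simp
    ring

lemma continuous_chordDir (α : ℝ) (i : Fin 2) : Continuous fun θ => chordDir α θ i := by
  unfold chordDir
  fin_cases i <;> simp <;> fun_prop

/-- The logarithmic potential of the uniform density on a circle is constant on that circle. -/
lemma log_chord (R α : ℝ) :
    IntervalIntegrable (fun θ => Real.log ‖circlePt R α - circlePt R θ‖) volume 0 (2 * Real.pi) ∧
    ∫ θ in (0)..(2 * Real.pi), Real.log ‖circlePt R α - circlePt R θ‖ =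
      2 * Real.pi * Real.log R := by
  have h1 := circleIntegrable_log_norm_sub_const (a := circleMap 0 R α) (c := 0) R
  have h2 := circleAverage_log_norm_sub_const_of_mem_closedBall (a := circleMap 0 R α) (c := 0)
    (R := R) (by simp)
  simp only [CircleIntegrable, Real.circleAverage, norm_circleMap_sub] at h1 h2
  refine ⟨h1, ?_⟩
  rw [← h2, smul_eq_mul, mul_inv_cancel_left₀ (by positivity)]

/-- Up to the factor `R`, the single-layer potential of the Kelvin matrix with constant density,
evaluated on the circle itself. -/
lemma kelvin_circle {R : ℝ} (hR : 0 < R) (lam mu α : ℝ) (i j : Fin 2) :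
    IntervalIntegrable (fun θ => KelvinG0 lam mu (circlePt R α - circlePt R θ) i j) volume
      0 (2 * Real.pi) ∧
    ∫ θ in (0)..(2 * Real.pi), KelvinG0 lam mu (circlePt R α - circlePt R θ) i j =
      if i = j then tau1 lam mu * Real.log R - tau2 lam mu / 2 else 0 := by
  obtain ⟨hl, hl'⟩ := log_chord R α
  have hae : ∀ᵐ θ, tau1 lam mu / (2 * Real.pi) *
      (if i = j then Real.log ‖circlePt R α - circlePt R θ‖ else 0)
        - tau2 lam mu / (2 * Real.pi) * (chordDir α θ i * chordDir α θ j) =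
      KelvinG0 lam mu (circlePt R α - circlePt R θ) i j := by
    filter_upwards [ae_chord_eq hR α i j] with θ hθ
    rw [KelvinG0, hθ]
  have hi1 : IntervalIntegrable (fun θ => tau1 lam mu / (2 * Real.pi) *
      (if i = j then Real.log ‖circlePt R α - circlePt R θ‖ else 0)) volume 0 (2 * Real.pi) := by
    split_ifs
    · exact hl.const_mul _
    · simp
  have hi2 : IntervalIntegrable (fun θ => tau2 lam mu / (2 * Real.pi) *
      (chordDir α θ i * chordDir α θ j)) volume 0 (2 * Real.pi) :=
    (continuous_const.mul ((continuous_chordDir α i).mul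
      (continuous_chordDir α j))).intervalIntegrable _ _
  refine ⟨(hi1.sub hi2).congr_ae (ae_restrict_of_ae hae), ?_⟩
  rw [← intervalIntegral.integral_congr_ae (hae.mono fun θ h _ => h),
    intervalIntegral.integral_sub hi1 hi2, intervalIntegral.integral_const_mul,
    intervalIntegral.integral_const_mul, integral_chordDir]
  have := Real.pi_pos
  split_ifs
  · rw [hl']
    field_simp
  · simp

lemma measurable_kelvin (lam mu : ℝ) (i j : Fin 2) :
    Measurable fun x => KelvinG0 lam mu x i j := by
  unfold KelvinG0
  split_ifs <;> fun_prop

/-! ### The single-layer potential on constants -/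

lemma SLc_single {R : ℝ} (hR : 0 < R) (lam mu : ℝ) {x : EuclideanSpace ℝ (Fin 2)}
    (hx : x ∈ Metric.sphere 0 R) (i : Fin 2) :
    SLc lam mu R x (Pi.single i 1) =
      ((tau1 lam mu * R * Real.log R - tau2 lam mu / 2 * R : ℝ) : ℂ) •
        (Pi.single i 1 : Fin 2 → ℂ) := by
  rw [← image_circlePt hR] at hx
  obtain ⟨α, -, rfl⟩ := hx
  funext j
  have hF : StronglyMeasurable fun y =>
      (KelvinG0 lam mu (circlePt R α - y)).mulVec (Pi.single i 1) := by
    refine Measurable.stronglyMeasurable (measurable_pi_lambda _ fun j => ?_)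
    simp only [Matrix.mulVec_single_one, Matrix.col_apply]
    exact (measurable_kelvin lam mu j i).comp (by fun_prop)
  rw [SLc, integral_sphere hR hF, intervalIntegral.integral_of_le (by positivity), Pi.smul_apply,
    eval_integral]
  · simp only [Matrix.mulVec_single_one, Matrix.col_apply]
    rw [← intervalIntegral.integral_of_le (by positivity), (kelvin_circle hR lam mu α j i).2]
    by_cases h : j = i
    · subst h
      simp
      ring
    · simp [h]
  · intro k
    simp only [Matrix.mulVec_single_one, Matrix.col_apply]
    exact (intervalIntegrable_iff_integrableOn_Ioc_of_le (by positivity)).1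
      (kelvin_circle hR lam mu α k i).1

/-- For every `s > 0` one has `τ₁ R ln R − (τ₂/2) R + 2πR β_s ≠ 0` and, with
`t = 1/(τ₁ R ln R − (τ₂/2) R + 2πR β_s)`, for every `x ∈ ∂D` and each `i ∈ {1,2}`,
`t (∫_{∂D} G⁰(x−y) e_i dσ(y) + 2πR β_s e_i) = e_i` in `ℂ²`; that is, the leading-order
single-layer operator `Ŝ^s_D` satisfies `Ŝ^s_D[t e_i] = e_i` on `∂D`. -/
theorem hatS_inverse_on_constants (R lam mu s : ℝ) (hR : 0 < R)
    (hmu : 0 < mu) (hlm : 0 < lam + mu) (hs : 0 < s) :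
    ((tau1 lam mu * R * Real.log R - tau2 lam mu / 2 * R : ℝ) : ℂ)
        + 2 * Real.pi * R * betaK lam mu s ≠ 0
    ∧ ∀ x ∈ Metric.sphere (0 : EuclideanSpace ℝ (Fin 2)) R, ∀ i : Fin 2,
        (1 / (((tau1 lam mu * R * Real.log R - tau2 lam mu / 2 * R : ℝ) : ℂ)
              + 2 * Real.pi * R * betaK lam mu s)) •
            (SLc lam mu R x (Pi.single i 1)
              + (2 * Real.pi * R * betaK lam mu s)
                  • (Pi.single i 1 : Fin 2 → ℂ))
          = (Pi.single i 1 : Fin 2 → ℂ) := by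
  have hne : ((tau1 lam mu * R * Real.log R - tau2 lam mu / 2 * R : ℝ) : ℂ)
      + 2 * Real.pi * R * betaK lam mu s ≠ 0 := by
    have htau : 0 < tau1 lam mu := by
      have : 0 < lam + 2 * mu := by linarith
      unfold tau1
      positivity
    -- the imaginary part is `-π τ₁ R / 2`
    have him : (((tau1 lam mu * R * Real.log R - tau2 lam mu / 2 * R : ℝ) : ℂ)
        + 2 * Real.pi * R * betaK lam mu s).im = -(Real.pi * tau1 lam mu * R / 2) := by
      have hb : (betaK lam mu s).im = -(tau1 lam mu / 4) := by
        have := Real.pi_pos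
        simp only [betaK, Complex.add_im, Complex.ofReal_im, Complex.sub_im, Complex.I_im, Complex.mul_im, Complex.ofReal_re,
          Complex.re_ofNat, Complex.im_ofNat]
        simp
        field_simp
      rw [show (2 * Real.pi * R : ℂ) = ((2 * Real.pi * R : ℝ) : ℂ) by push_cast; ring,
        Complex.add_im, Complex.ofReal_im, Complex.im_ofReal_mul, hb]
      ring
    intro h
    rw [h, Complex.zero_im] at him
    have : 0 < Real.pi * tau1 lam mu * R / 2 := by positivity
    linarith
  refine ⟨hne, fun x hx i => ?_⟩
  rw [SLc_single hR lam mu hx i, ← add_smul, smul_smul, one_div, inv_mul_cancel₀ hne, one_smul]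
end
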